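/- (Corollary 1, finding an ε-approximate stationary point.) In the over-the-air federated PG model, suppose σ_h² ≤ (N+1)·m_h² and 0 < α ≤ 1/(m_h·L), and set Λ = M·(N+1)·m_h² − (M−1)·σ_h². Let ε > 0. If additionally 3·σ_h²·V² ≤ Λ·ε, 3·M·σ̄² ≤ N·Λ·ε, and K is an integer with K ≥ 6·M·N·m_h·(J(θ^0) − J*)/(α·Λ·ε) and K ≥ 1, then (1/K)·Σ_{k=0}^{K−1} E[‖∇J(θ^k)‖²] ≤ ε; i.e., the algorithm reaches an ε-approximate stationary point on average. -/

import Mathlib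

open MeasureTheory ProbabilityTheory Gradient

/-- The family `{h_i}_i ∪ {X_{i,m}}_{i,m} ∪ {n}` combined into a single family of random
variables with common codomain `ℝ × ℝ^d`; each member generates exactly the σ-algebra of the
corresponding original random variable, so (conditional) mutual independence of this family is
equivalent to (conditional) mutual independence of the original family. -/
def otaFam {d N M : ℕ} {Ω : Type*}
    (h : Fin N → Ω → ℝ) (X : Fin N → Fin M → Ω → EuclideanSpace ℝ (Fin d))
    (n : Ω → EuclideanSpace ℝ (Fin d)) :
    Fin N ⊕ (Fin N × Fin M) ⊕ Unit → Ω → ℝ × EuclideanSpace ℝ (Fin d)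
  | Sum.inl i => fun ω => (h i ω, 0)
  | Sum.inr (Sum.inl (i, m)) => fun ω => (0, X i m ω)
  | Sum.inr (Sum.inr _) => fun ω => (0, n ω)

/-!
Given the past `𝓕 k`, the regular conditional law of the inputs of round `k` makes them genuinely
independent, and `∇ J (θ k)` is a constant under it. The mean and the second moment of the received
signal are therefore those of a sum of independent vectors; integrated back, they show that the
server performs stochastic gradient descent along a direction with conditional mean
`(N * m_h) • ∇ J (θ k)` and conditional second moment bounded by an affine function of
`‖∇ J (θ k)‖ ^ 2`. The quadratic upper bound for a function with Lipschitz gradient then makes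
`E[J (θ k)]` decrease by a multiple of `Λ * E[‖∇ J (θ k)‖ ^ 2]` up to a constant, and these
decreases telescope against the lower bound for `J`.
-/

section Smooth

open scoped RealInnerProductSpace NNReal

variable {E : Type*} [NormedAddCommGroup E] [InnerProductSpace ℝ E] [CompleteSpace E] {f : E → ℝ}

theorem hasDerivAt_comp_add_smul {x u : E} {t : ℝ} (hf : DifferentiableAt ℝ f (x + t • u)) :
    HasDerivAt (fun s : ℝ => f (x + s • u)) ⟪∇ f (x + t • u), u⟫ t := by
  have hline : HasDerivAt (fun s : ℝ => x + s • u) u t := by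
    simpa using ((hasDerivAt_id t).smul_const u).const_add x
  simpa using! hf.hasGradientAt.hasFDerivAt.comp_hasDerivAt t hline

theorem le_add_inner_gradient_add_norm_sq {L : ℝ≥0} (hf : Differentiable ℝ f)
    (hL : LipschitzWith L (∇ f)) (x u : E) :
    f (x + u) ≤ f x + ⟪∇ f x, u⟫ + L / 2 * ‖u‖ ^ 2 := by
  have hderiv (t : ℝ) := hasDerivAt_comp_add_smul (hf (x + t • u))
  have hderiv_bound (t : ℝ) :
      HasDerivAt (fun s : ℝ => f x + s * ⟪∇ f x, u⟫ + L / 2 * ‖u‖ ^ 2 * s ^ 2)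
        (⟪∇ f x, u⟫ + L * t * ‖u‖ ^ 2) t := by
    convert! (((hasDerivAt_id t).mul_const ⟪∇ f x, u⟫).const_add (f x)).add
      (((hasDerivAt_id t).pow 2).const_mul (L / 2 * ‖u‖ ^ 2)) using 1
    simp only [id_eq]
    ring
  have hle (t : ℝ) (ht : t ∈ Set.Ico (0 : ℝ) 1) :
      ⟪∇ f (x + t • u), u⟫ ≤ ⟪∇ f x, u⟫ + L * t * ‖u‖ ^ 2 := by
    have hgrad : ‖∇ f (x + t • u) - ∇ f x‖ ≤ L * (t * ‖u‖) := by
      simpa [norm_smul, abs_of_nonneg ht.1] using hL.norm_sub_le (x + t • u) x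
    calc ⟪∇ f (x + t • u), u⟫ = ⟪∇ f x, u⟫ + ⟪∇ f (x + t • u) - ∇ f x, u⟫ := by
          rw [inner_sub_left]; ring
      _ ≤ ⟪∇ f x, u⟫ + L * (t * ‖u‖) * ‖u‖ := by
          gcongr
          exact (real_inner_le_norm _ _).trans (by gcongr)
      _ = ⟪∇ f x, u⟫ + L * t * ‖u‖ ^ 2 := by ring
  have hone := image_le_of_deriv_right_le_deriv_boundary
    (fun t _ => (hderiv t).continuousAt.continuousWithinAt)
    (fun t _ => (hderiv t).hasDerivWithinAt) (by simp)
    (fun t _ => (hderiv_bound t).continuousAt.continuousWithinAt)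
    (fun t _ => (hderiv_bound t).hasDerivWithinAt) hle (Set.right_mem_Icc.2 zero_le_one)
  simpa using hone

end Smooth

section SecondMoment

open scoped RealInnerProductSpace

variable {Ω E : Type*} {mΩ : MeasurableSpace Ω} {ν : Measure Ω} [NormedAddCommGroup E]
  [InnerProductSpace ℝ E] {Y Z : Ω → E}

theorem integrable_inner_of_memLp_two (hY : MemLp Y 2 ν) (hZ : MemLp Z 2 ν) :
    Integrable (fun ω => ⟪Y ω, Z ω⟫) ν :=
  memLp_one_iff_integrable.1 <| MemLp.of_bilin _ 1 hY hZ (hY.1.inner hZ.1) <|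
    Filter.Eventually.of_forall fun ω => by
      simpa using nnnorm_inner_le_nnnorm (𝕜 := ℝ) (Y ω) (Z ω)

theorem integral_norm_add_sq (hY : MemLp Y 2 ν) (hZ : MemLp Z 2 ν) :
    ∫ ω, ‖Y ω + Z ω‖ ^ 2 ∂ν
      = ∫ ω, ‖Y ω‖ ^ 2 ∂ν + 2 * ∫ ω, ⟪Y ω, Z ω⟫ ∂ν + ∫ ω, ‖Z ω‖ ^ 2 ∂ν := by
  have hYsq := hY.integrable_norm_pow two_ne_zero
  have hYZ := (integrable_inner_of_memLp_two hY hZ).const_mul 2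
  simp only [norm_add_sq_real]
  rw [integral_add (by exact hYsq.add hYZ) (hZ.integrable_norm_pow two_ne_zero),
    integral_add hYsq hYZ, integral_const_mul]

variable [MeasurableSpace E] [BorelSpace E] {c : Ω → ℝ}

theorem memLp_two_smul_of_indepFun (hc : MemLp c 2 ν) (hY : MemLp Y 2 ν) (hcY : IndepFun c Y ν) :
    MemLp (fun ω => c ω • Y ω) 2 ν := by
  refine (memLp_two_iff_integrable_sq_norm (f := fun ω => c ω • Y ω) (hc.1.smul hY.1)).2 ?_
  simp only [norm_smul, mul_pow]
  exact (hcY.comp (measurable_norm.pow_const 2) (measurable_norm.pow_const 2)).integrable_mul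
    (hc.integrable_norm_pow two_ne_zero) (hY.integrable_norm_pow two_ne_zero)

theorem integral_norm_sq_smul_of_indepFun (hc : AEStronglyMeasurable c ν)
    (hY : AEStronglyMeasurable Y ν) (hcY : IndepFun c Y ν) :
    ∫ ω, ‖c ω • Y ω‖ ^ 2 ∂ν = (∫ ω, c ω ^ 2 ∂ν) * ∫ ω, ‖Y ω‖ ^ 2 ∂ν := by
  simp only [norm_smul, mul_pow, Real.norm_eq_abs, sq_abs]
  exact (hcY.comp (measurable_id.pow_const 2)
    (measurable_norm.pow_const 2)).integral_fun_mul_eq_mul_integral (hc.pow 2) (hY.norm.pow 2)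

variable [CompleteSpace E] [IsFiniteMeasure ν]

theorem integral_inner_of_indepFun (hY : MemLp Y 2 ν) (hZ : MemLp Z 2 ν) (hYZ : IndepFun Y Z ν) :
    ∫ ω, ⟪Y ω, Z ω⟫ ∂ν = ⟪∫ ω, Y ω ∂ν, ∫ ω, Z ω ∂ν⟫ :=
  hYZ.integral_bilin (hY.integrable one_le_two) (hZ.integrable one_le_two) (innerSL ℝ)

variable {ι : Type*} {s : Finset ι} {F : ι → Ω → E}

theorem integral_norm_sq_sum_of_pairwise_indepFun (hF : ∀ i ∈ s, MemLp (F i) 2 ν)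
    (hind : (s : Set ι).Pairwise fun i j => IndepFun (F i) (F j) ν) :
    ∫ ω, ‖∑ i ∈ s, F i ω‖ ^ 2 ∂ν = ‖∑ i ∈ s, ∫ ω, F i ω ∂ν‖ ^ 2
      + ∑ i ∈ s, (∫ ω, ‖F i ω‖ ^ 2 ∂ν - ‖∫ ω, F i ω ∂ν‖ ^ 2) := by
  classical
  induction s using Finset.induction_on with
  | empty => simp
  | insert a t ha ih =>
    simp only [Finset.forall_mem_insert, Finset.coe_insert] at hF hind
    have hcross : ∫ ω, ⟪F a ω, ∑ i ∈ t, F i ω⟫ ∂ν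
        = ⟪∫ ω, F a ω ∂ν, ∑ i ∈ t, ∫ ω, F i ω ∂ν⟫ := by
      simp only [inner_sum]
      rw [integral_finsetSum t fun i hi => integrable_inner_of_memLp_two hF.1 (hF.2 i hi)]
      exact Finset.sum_congr rfl fun i hi => integral_inner_of_indepFun hF.1 (hF.2 i hi) <|
        hind (Set.mem_insert a t) (Set.mem_insert_of_mem a hi) (ne_of_mem_of_not_mem hi ha).symm
    simp only [Finset.sum_insert ha]
    rw [integral_norm_add_sq hF.1 (memLp_finsetSum t hF.2), hcross,
      ih hF.2 (hind.mono (Set.subset_insert a t)), norm_add_sq_real]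
    ring

theorem integral_norm_sq_sum_le_of_pairwise_indepFun {g : E} {B : ℝ}
    (hF : ∀ i ∈ s, MemLp (F i) 2 ν)
    (hind : (s : Set ι).Pairwise fun i j => IndepFun (F i) (F j) ν)
    (hmean : ∀ i ∈ s, ∫ ω, F i ω ∂ν = g) (hsq : ∀ i ∈ s, ∫ ω, ‖F i ω‖ ^ 2 ∂ν ≤ B) :
    ∫ ω, ‖∑ i ∈ s, F i ω‖ ^ 2 ∂ν ≤ s.card * B + s.card * (s.card - 1) * ‖g‖ ^ 2 := by
  calc ∫ ω, ‖∑ i ∈ s, F i ω‖ ^ 2 ∂ν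
      = ‖∑ i ∈ s, ∫ ω, F i ω ∂ν‖ ^ 2
          + ∑ i ∈ s, (∫ ω, ‖F i ω‖ ^ 2 ∂ν - ‖∫ ω, F i ω ∂ν‖ ^ 2) :=
        integral_norm_sq_sum_of_pairwise_indepFun hF hind
    _ ≤ ‖∑ _i ∈ s, g‖ ^ 2 + ∑ _i ∈ s, (B - ‖g‖ ^ 2) := by
        rw [Finset.sum_congr rfl hmean]
        gcongr with i hi
        · exact hsq i hi
        · rw [hmean i hi]
    _ = s.card * B + s.card * (s.card - 1) * ‖g‖ ^ 2 := by
        simp only [Finset.sum_const, ← Nat.cast_smul_eq_nsmul ℝ, norm_smul,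
          Real.norm_natCast]
        ring

end SecondMoment

section BlockIndependence

theorem indepFun_of_iIndepFun_of_forall_ne {Ω ι A B : Type*} {β : ι → Type*}
    {mΩ : MeasurableSpace Ω} {ν : Measure Ω} [∀ i, MeasurableSpace (β i)] [Finite A] [Finite B]
    {f : ∀ i, Ω → β i} (hind : iIndepFun f ν) (hf : ∀ i, AEMeasurable (f i) ν)
    {a : A → ι} {b : B → ι} (hab : ∀ i j, a i ≠ b j) :
    IndepFun (fun ω i => f (a i) ω) (fun ω j => f (b j) ω) ν := by
  classical
  cases nonempty_fintype A
  cases nonempty_fintype B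
  have hdisj : Disjoint (Finset.univ.image a) (Finset.univ.image b) := by
    simp only [Finset.disjoint_left, Finset.mem_image, Finset.mem_univ, true_and]
    rintro _ ⟨i, rfl⟩ ⟨j, hj⟩
    exact hab i j hj.symm
  exact (hind.indepFun_finset₀ _ _ hdisj hf).comp
    (φ := fun u i => u ⟨a i, Finset.mem_image_of_mem a (Finset.mem_univ i)⟩)
    (ψ := fun u j => u ⟨b j, Finset.mem_image_of_mem b (Finset.mem_univ j)⟩)
    (measurable_pi_lambda _ fun _ => measurable_pi_apply _)
    (measurable_pi_lambda _ fun _ => measurable_pi_apply _)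

end BlockIndependence

section CondIndependence

theorem ae_iIndepFun_of_kernel_iIndepFun {α Ω ι : Type*} [Finite ι] {β : ι → Type*}
    {mα : MeasurableSpace α} {mΩ : MeasurableSpace Ω} [∀ i, MeasurableSpace (β i)]
    [∀ i, MeasurableSpace.CountablyGenerated (β i)] {κ : Kernel α Ω} [IsMarkovKernel κ]
    {μ : Measure α} {f : ∀ i, Ω → β i} (hf : ∀ i, Measurable (f i))
    (hind : Kernel.iIndepFun f κ μ) : ∀ᵐ a ∂μ, iIndepFun f (κ a) := by
  cases nonempty_fintype ι
  -- Over countable generating algebras there are only countably many rectangles, so their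
  -- product formulas hold simultaneously outside a single null set.
  let C (i : ι) : Set (Set (β i)) :=
    generateSetAlgebra (MeasurableSpace.countableGeneratingSet (β i))
  have hC_countable (i : ι) : Countable (C i) :=
    (countable_generateSetAlgebra MeasurableSpace.countable_countableGeneratingSet).to_subtype
  have hC_gen (i : ι) : MeasurableSpace.generateFrom (C i) = ‹∀ i, MeasurableSpace (β i)› i := by
    rw [generateFrom_generateSetAlgebra_eq, MeasurableSpace.generateFrom_countableGeneratingSet]
  have hC_meas (i : ι) (s : C i) : MeasurableSet (s : Set (β i)) :=
    hC_gen i ▸ MeasurableSpace.measurableSet_generateFrom s.2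
  have hrect : ∀ᵐ a ∂μ, ∀ s : ∀ i, C i,
      κ a (⋂ i, f i ⁻¹' (s i : Set (β i))) = ∏ i, κ a (f i ⁻¹' (s i : Set (β i))) := by
    refine ae_all_iff.2 fun s => ?_
    simpa using ((Kernel.iIndepFun_iff_measure_inter_preimage_eq_mul _ _).1 hind) Finset.univ
      (sets := fun i => s i) fun i _ => hC_meas i (s i)
  filter_upwards [hrect] with a ha
  rw [iIndepFun_iff_map_fun_eq_pi_map fun i => (hf i).aemeasurable, eq_comm]
  have (i : ι) := Measure.isProbabilityMeasure_map (μ := κ a) (hf i).aemeasurable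
  refine Measure.pi_eq_generateFrom hC_gen
    (fun i _ hs _ ht _ => isSetAlgebra_generateSetAlgebra.inter_mem hs ht)
    (fun i => ⟨fun _ => Set.univ, fun _ => isSetAlgebra_generateSetAlgebra.univ_mem,
      fun _ => measure_lt_top _ _, Set.iUnion_const _⟩) fun s hs => ?_
  have hs_meas (i : ι) : MeasurableSet (s i) := hC_meas i ⟨s i, hs i⟩
  rw [Measure.map_apply (measurable_pi_lambda _ hf) (MeasurableSet.univ_pi hs_meas)]
  simp only [Measure.map_apply (hf _) (hs_meas _)]
  convert! ha fun i => ⟨s i, hs i⟩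
  ext ω
  simp

end CondIndependence

section CondExpKernel

variable {Ω : Type*} {m mΩ : MeasurableSpace Ω} [StandardBorelSpace Ω] {μ : Measure Ω}
  [IsFiniteMeasure μ]

theorem ae_iIndepFun_condExpKernel (hm : m ≤ mΩ) {ι : Type*} [Finite ι] {β : ι → Type*}
    [∀ i, MeasurableSpace (β i)] [∀ i, MeasurableSpace.CountablyGenerated (β i)]
    {f : ∀ i, Ω → β i} (hf : ∀ i, AEMeasurable (f i) μ) (hind : iCondIndepFun m hm f μ) :
    ∀ᵐ ω ∂μ, iIndepFun f (condExpKernel μ m ω) := by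
  cases isEmpty_or_nonempty Ω
  · exact .of_forall fun ω => isEmptyElim ω
  have hmk (i : ι) : ∀ᵐ ω ∂μ.trim hm, f i =ᵐ[condExpKernel μ m ω] (hf i).mk (f i) :=
    Measure.ae_ae_of_ae_comp <| by
      rw [condExpKernel_comp_trim hm]
      exact (hf i).ae_eq_mk
  have hind_mk := ae_iIndepFun_of_kernel_iIndepFun (fun i => (hf i).measurable_mk)
    (Kernel.iIndepFun.congr' hind hmk)
  filter_upwards [ae_of_ae_trim hm (ae_all_iff.2 hmk), ae_of_ae_trim hm hind_mk] with ω heq hω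
  exact hω.congr fun i => (heq i).symm

theorem lintegral_lintegral_condExpKernel (hm : m ≤ mΩ) {φ : Ω → ENNReal}
    (hφ : AEMeasurable φ μ) :
    ∫⁻ ω, ∫⁻ ω', φ ω' ∂condExpKernel μ m ω ∂μ = ∫⁻ ω, φ ω ∂μ := by
  have hκ := (condExpKernel μ m).aemeasurable (μ := μ.trim hm)
  rw [← condExpKernel_comp_trim (μ := μ) hm] at hφ
  conv_rhs => rw [← condExpKernel_comp_trim (μ := μ) hm, Measure.lintegral_bind hκ hφ]
  exact (lintegral_trim_ae hm ((Measure.aemeasurable_lintegral hφ).comp_aemeasurable hκ)).symm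

theorem integral_le_of_ae_integral_condExpKernel_le (hm : m ≤ mΩ) {f R : Ω → ℝ}
    (hf : Integrable f μ) (hR : Integrable R μ)
    (hle : ∀ᵐ ω ∂μ, ∫ ω', f ω' ∂condExpKernel μ m ω ≤ R ω) :
    ∫ ω, f ω ∂μ ≤ ∫ ω, R ω ∂μ := by
  rw [← integral_condExp hm]
  refine integral_mono_ae integrable_condExp hR ?_
  filter_upwards [condExp_ae_eq_integral_condExpKernel hm hf, hle] with ω heq hω
  exact heq.trans_le hω

theorem ae_integral_condExpKernel_le (hm : m ≤ mΩ) {f R : Ω → ℝ} (hf : Integrable f μ)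
    (hle : μ[f | m] ≤ᵐ[μ] R) : ∀ᵐ ω ∂μ, ∫ ω', f ω' ∂condExpKernel μ m ω ≤ R ω :=
  (condExp_ae_eq_integral_condExpKernel hm hf).symm.le.trans hle

variable {E : Type*} [NormedAddCommGroup E] {f : Ω → E}

theorem ae_integral_condExpKernel_eq [NormedSpace ℝ E] [CompleteSpace E] (hm : m ≤ mΩ) {g : Ω → E}
    (hf : Integrable f μ) (heq : μ[f | m] =ᵐ[μ] g) :
    ∀ᵐ ω ∂μ, ∫ ω', f ω' ∂condExpKernel μ m ω = g ω :=
  (condExp_ae_eq_integral_condExpKernel hm hf).symm.trans heq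

theorem ae_memLp_two_condExpKernel (hf : MemLp f 2 μ) :
    ∀ᵐ ω ∂μ, MemLp f 2 (condExpKernel μ m ω) := by
  filter_upwards [(hf.integrable one_le_two).condExpKernel_ae (m := m),
    (hf.integrable_norm_pow two_ne_zero).condExpKernel_ae (m := m)] with ω hω hω_sq
  exact (memLp_two_iff_integrable_sq_norm hω.1).2 hω_sq

theorem integrable_of_ae_integral_norm_condExpKernel_le (hm : m ≤ mΩ)
    (hf : AEStronglyMeasurable f μ) {R : Ω → ℝ} (hR : Integrable R μ)
    (hfint : ∀ᵐ ω ∂μ, Integrable f (condExpKernel μ m ω))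
    (hle : ∀ᵐ ω ∂μ, ∫ ω', ‖f ω'‖ ∂condExpKernel μ m ω ≤ R ω) : Integrable f μ := by
  refine ⟨hf, ?_⟩
  calc ∫⁻ ω, ‖f ω‖ₑ ∂μ
      = ∫⁻ ω, ∫⁻ ω', ‖f ω'‖ₑ ∂condExpKernel μ m ω ∂μ :=
        (lintegral_lintegral_condExpKernel hm hf.enorm).symm
    _ ≤ ∫⁻ ω, ‖R ω‖ₑ ∂μ := by
        refine lintegral_mono_ae ?_
        filter_upwards [hfint, hle] with ω hint hω
        rw [← ofReal_integral_norm_eq_lintegral_enorm hint]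
        exact (ENNReal.ofReal_le_ofReal hω).trans (Real.ofReal_le_enorm _)
    _ < ⊤ := hR.2

theorem memLp_two_of_ae_integral_norm_sq_condExpKernel_le (hm : m ≤ mΩ)
    (hf : AEStronglyMeasurable f μ) {R : Ω → ℝ} (hR : Integrable R μ)
    (hfL2 : ∀ᵐ ω ∂μ, MemLp f 2 (condExpKernel μ m ω))
    (hle : ∀ᵐ ω ∂μ, ∫ ω', ‖f ω'‖ ^ 2 ∂condExpKernel μ m ω ≤ R ω) : MemLp f 2 μ := by
  refine (memLp_two_iff_integrable_sq_norm hf).2 ?_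
  refine integrable_of_ae_integral_norm_condExpKernel_le hm (hf.norm.pow 2) hR ?_ ?_
  · filter_upwards [hfL2] with ω hω using hω.integrable_norm_pow two_ne_zero
  · simpa using hle

end CondExpKernel

section CondExp

variable {Ω β F : Type*} {m mΩ : MeasurableSpace Ω} {μ : Measure Ω}
  [MeasurableSpace β] [NormedAddCommGroup F] [NormedSpace ℝ F] [CompleteSpace F]

theorem condExp_comp_ae_eq_integral_of_indep (hm : m ≤ mΩ) [SigmaFinite (μ.trim hm)] {f : Ω → β}
    (hf : AEMeasurable f μ) (hind : Indep (MeasurableSpace.comap f inferInstance) m μ)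
    {φ : β → F} (hφ : StronglyMeasurable φ) :
    μ[fun ω => φ (f ω) | m] =ᵐ[μ] fun _ => ∫ ω, φ (f ω) ∂μ := by
  have hind_mk : Indep (MeasurableSpace.comap (hf.mk f) inferInstance) m μ := by
    rw [← MeasurableSpace.comap_id (m := m)] at hind ⊢
    have h := IndepFun.congr ((IndepFun_iff_Indep (mγ := m) f id μ).2 hind) hf.ae_eq_mk .rfl
    exact (IndepFun_iff_Indep (mγ := m) (hf.mk f) id μ).1 h
  have hmk : (fun ω => φ (f ω)) =ᵐ[μ] fun ω => φ (hf.mk f ω) := hf.ae_eq_mk.fun_comp φ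
  rw [integral_congr_ae hmk]
  exact (condExp_congr_ae hmk).trans <| condExp_indep_eq hf.measurable_mk.comap_le hm
    (hφ.comp_measurable (comap_measurable _)) hind_mk

end CondExp

section BatchMean

variable {Ω E : Type*} {M : ℕ} [NormedAddCommGroup E] [InnerProductSpace ℝ E]

/-- The estimate an agent forms by averaging a batch of `M` samples. -/
noncomputable def batchMean (X : Fin M → Ω → E) (ω : Ω) : E :=
  (1 / (M : ℝ)) • ∑ m, X m ω

variable {mΩ : MeasurableSpace Ω} {ν : Measure Ω} {X : Fin M → Ω → E} {g : E}

theorem memLp_two_batchMean (hX : ∀ m, MemLp (X m) 2 ν) : MemLp (batchMean X) 2 ν :=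
  (memLp_finsetSum _ fun m _ => hX m).const_smul (1 / (M : ℝ))

theorem integral_batchMean (hM : 0 < M) (hX : ∀ m, Integrable (X m) ν)
    (hmean : ∀ m, ∫ ω, X m ω ∂ν = g) : ∫ ω, batchMean X ω ∂ν = g := by
  have hM0 : (M : ℝ) ≠ 0 := by exact_mod_cast hM.ne'
  simp only [batchMean]
  rw [integral_smul, integral_finsetSum _ fun m _ => hX m]
  simp [hmean, ← Nat.cast_smul_eq_nsmul ℝ, smul_smul, hM0]

theorem integral_norm_sq_batchMean_le [CompleteSpace E] [MeasurableSpace E] [BorelSpace E]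
    [IsFiniteMeasure ν] (hM : 0 < M) {W : ℝ} (hX : ∀ m, MemLp (X m) 2 ν)
    (hind : Pairwise fun m m' => IndepFun (X m) (X m') ν) (hmean : ∀ m, ∫ ω, X m ω ∂ν = g)
    (hsq : ∀ m, ∫ ω, ‖X m ω‖ ^ 2 ∂ν ≤ W) :
    ∫ ω, ‖batchMean X ω‖ ^ 2 ∂ν ≤ W / M + (M - 1) / M * ‖g‖ ^ 2 := by
  have hsum := integral_norm_sq_sum_le_of_pairwise_indepFun (s := Finset.univ)
    (fun m _ => hX m) (hind.set_pairwise _) (fun m _ => hmean m) fun m _ => hsq m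
  rw [Finset.card_univ, Fintype.card_fin] at hsum
  calc ∫ ω, ‖batchMean X ω‖ ^ 2 ∂ν
      = (1 / (M : ℝ)) ^ 2 * ∫ ω, ‖∑ m, X m ω‖ ^ 2 ∂ν := by
        simp only [batchMean, norm_smul, mul_pow, integral_const_mul, Real.norm_eq_abs, sq_abs]
    _ ≤ (1 / (M : ℝ)) ^ 2 * (M * W + M * (M - 1) * ‖g‖ ^ 2) := by gcongr
    _ = W / M + (M - 1) / M * ‖g‖ ^ 2 := by field_simp

end BatchMean

section Round

variable {Ω E : Type*} {N M : ℕ} [NormedAddCommGroup E]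

/-- The random inputs of one communication round as a single family, extending `otaFam` from
`ℝ^d` to an arbitrary space: every member takes values in `ℝ × E` and is padded by `0`, so that
mutual independence can be expressed for one codomain. -/
def roundFamily (h : Fin N → Ω → ℝ) (X : Fin N → Fin M → Ω → E) (n : Ω → E) :
    Fin N ⊕ (Fin N × Fin M) ⊕ Unit → Ω → ℝ × E
  | Sum.inl i => fun ω => (h i ω, 0)
  | Sum.inr (Sum.inl (i, m)) => fun ω => (0, X i m ω)
  | Sum.inr (Sum.inr _) => fun ω => (0, n ω)

theorem otaFam_eq_roundFamily {d : ℕ} (h : Fin N → Ω → ℝ)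
    (X : Fin N → Fin M → Ω → EuclideanSpace ℝ (Fin d)) (n : Ω → EuclideanSpace ℝ (Fin d)) :
    otaFam h X n = roundFamily h X n := by
  funext p
  rcases p with _ | _ | _ <;> rfl

variable [MeasurableSpace E] {mΩ : MeasurableSpace Ω}

theorem aemeasurable_roundFamily {ν : Measure Ω} {h : Fin N → Ω → ℝ}
    {X : Fin N → Fin M → Ω → E} {n : Ω → E} (hh : ∀ i, AEMeasurable (h i) ν)
    (hX : ∀ i m, AEMeasurable (X i m) ν) (hn : AEMeasurable n ν) (p) :
    AEMeasurable (roundFamily h X n p) ν := by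
  rcases p with i | ⟨i, m⟩ | _
  · exact (hh i).prodMk aemeasurable_const
  · exact aemeasurable_const.prodMk (hX i m)
  · exact aemeasurable_const.prodMk hn

variable [InnerProductSpace ℝ E]

/-- The signal `v = ∑ᵢ hᵢ • (batch mean of agent i) + n` received by the server in one round. -/
noncomputable def aggregate (h : Fin N → Ω → ℝ) (X : Fin N → Fin M → Ω → E) (n : Ω → E)
    (ω : Ω) : E :=
  (∑ i, h i ω • batchMean (X i) ω) + n ω

/-- The bound on the second moment of the received signal in terms of `G = ‖g‖ ^ 2`, where `g` is
the common mean of the samples, `W` bounds their second moment and `B` that of the noise. -/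
noncomputable def aggregateBound (N M : ℕ) (m_h σ_h2 W B G : ℝ) : ℝ :=
  N * (σ_h2 * (W / M + (M - 1) / M * G)) + N * (N - 1) * (m_h ^ 2 * G) + B

/-- One communication round with deterministic mean gradient `g`: mutually independent square
integrable gains, samples and noise, with gain mean `m_h`, sample mean `g`, zero noise mean, and
bounds `σ_h2`, `W` and `B` on the second moments (not variances) of gains, samples and noise. -/
structure OverTheAirRound (ν : Measure Ω) (h : Fin N → Ω → ℝ) (X : Fin N → Fin M → Ω → E)
    (n : Ω → E) (m_h σ_h2 W B : ℝ) (g : E) : Prop where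
  iIndepFun : iIndepFun (roundFamily h X n) ν
  memLp_gain (i : Fin N) : MemLp (h i) 2 ν
  memLp_sample (i : Fin N) (m : Fin M) : MemLp (X i m) 2 ν
  memLp_noise : MemLp n 2 ν
  integral_gain (i : Fin N) : ∫ ω, h i ω ∂ν = m_h
  integral_gain_sq_le (i : Fin N) : ∫ ω, h i ω ^ 2 ∂ν ≤ σ_h2
  integral_sample (i : Fin N) (m : Fin M) : ∫ ω, X i m ω ∂ν = g
  integral_norm_sq_sample_le (i : Fin N) (m : Fin M) : ∫ ω, ‖X i m ω‖ ^ 2 ∂ν ≤ W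
  integral_noise : ∫ ω, n ω ∂ν = 0
  integral_norm_sq_noise_le : ∫ ω, ‖n ω‖ ^ 2 ∂ν ≤ B

namespace OverTheAirRound

variable {ν : Measure Ω} {h : Fin N → Ω → ℝ} {X : Fin N → Fin M → Ω → E} {n : Ω → E}
  {m_h σ_h2 W B : ℝ} {g : E}

theorem indepFun_roundFamily_comp [BorelSpace E]
    (hr : OverTheAirRound ν h X n m_h σ_h2 W B g) {A A' : Type*} [Finite A] [Finite A']
    {a : A → Fin N ⊕ (Fin N × Fin M) ⊕ Unit} {a' : A' → Fin N ⊕ (Fin N × Fin M) ⊕ Unit}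
    (hne : ∀ i j, a i ≠ a' j) :
    IndepFun (fun ω i => roundFamily h X n (a i) ω) (fun ω j => roundFamily h X n (a' j) ω) ν :=
  indepFun_of_iIndepFun_of_forall_ne hr.iIndepFun
    (aemeasurable_roundFamily (fun i => (hr.memLp_gain i).1.aemeasurable)
      (fun i m => (hr.memLp_sample i m).1.aemeasurable) hr.memLp_noise.1.aemeasurable) hne

theorem pairwise_indepFun_sample (hr : OverTheAirRound ν h X n m_h σ_h2 W B g) (i : Fin N) :
    Pairwise fun m m' => IndepFun (X i m) (X i m') ν := fun m m' hne =>
  (hr.iIndepFun.indepFun (i := .inr (.inl (i, m))) (j := .inr (.inl (i, m')))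
    (by simpa using hne)).comp measurable_snd measurable_snd

variable [BorelSpace E] [SecondCountableTopology E]

theorem indepFun_gain_batchMean (hr : OverTheAirRound ν h X n m_h σ_h2 W B g) (i : Fin N) :
    IndepFun (h i) (batchMean (X i)) ν := by
  let gain (u : Unit → ℝ × E) : ℝ := (u ()).1
  let batch (u : Fin M → ℝ × E) : E := (1 / (M : ℝ)) • ∑ m, (u m).2
  have hgain : Measurable gain := by fun_prop
  have hbatch : Measurable batch := by fun_prop
  exact (hr.indepFun_roundFamily_comp (a := fun _ : Unit => .inl i)
    (a' := fun m : Fin M => .inr (.inl (i, m))) (by simp)).comp hgain hbatch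

theorem pairwise_indepFun_gain_smul_batchMean (hr : OverTheAirRound ν h X n m_h σ_h2 W B g) :
    Pairwise fun i j => IndepFun (fun ω => h i ω • batchMean (X i) ω)
      (fun ω => h j ω • batchMean (X j) ω) ν := fun i j hne => by
  let agent (i : Fin N) (o : Option (Fin M)) : Fin N ⊕ (Fin N × Fin M) ⊕ Unit :=
    o.elim (.inl i) fun m => .inr (.inl (i, m))
  let contribution (u : Option (Fin M) → ℝ × E) : E :=
    (u none).1 • (1 / (M : ℝ)) • ∑ m, (u (some m)).2
  have hcontribution : Measurable contribution := by fun_prop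
  have hagent (o o' : Option (Fin M)) : agent i o ≠ agent j o' := by
    cases o <;> cases o' <;> simp [agent, hne]
  exact (hr.indepFun_roundFamily_comp hagent).comp hcontribution hcontribution

theorem indepFun_sum_noise (hr : OverTheAirRound ν h X n m_h σ_h2 W B g) :
    IndepFun (fun ω => ∑ i, h i ω • batchMean (X i) ω) n ν := by
  let input (p : Fin N ⊕ Fin N × Fin M) : Fin N ⊕ (Fin N × Fin M) ⊕ Unit :=
    p.elim .inl fun q => .inr (.inl q)
  let signal (u : Fin N ⊕ Fin N × Fin M → ℝ × E) : E :=
    ∑ i, (u (.inl i)).1 • (1 / (M : ℝ)) • ∑ m, (u (.inr (i, m))).2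
  let noise (u : Unit → ℝ × E) : E := (u ()).2
  have hsignal : Measurable signal := by fun_prop
  have hnoise : Measurable noise := by fun_prop
  exact (hr.indepFun_roundFamily_comp (a := input) (a' := fun _ : Unit => .inr (.inr ()))
    (by rintro (_ | _) <;> simp [input])).comp hsignal hnoise

theorem memLp_gain_smul_batchMean (hr : OverTheAirRound ν h X n m_h σ_h2 W B g) (i : Fin N) :
    MemLp (fun ω => h i ω • batchMean (X i) ω) 2 ν :=
  memLp_two_smul_of_indepFun (hr.memLp_gain i) (memLp_two_batchMean (hr.memLp_sample i))
    (hr.indepFun_gain_batchMean i)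

theorem memLp_aggregate (hr : OverTheAirRound ν h X n m_h σ_h2 W B g) :
    MemLp (aggregate h X n) 2 ν :=
  (memLp_finsetSum _ fun i _ => hr.memLp_gain_smul_batchMean i).add hr.memLp_noise

variable [IsFiniteMeasure ν]

theorem integral_gain_smul_batchMean (hM : 0 < M) (hr : OverTheAirRound ν h X n m_h σ_h2 W B g)
    (i : Fin N) : ∫ ω, h i ω • batchMean (X i) ω ∂ν = m_h • g := by
  rw [(hr.indepFun_gain_batchMean i).integral_fun_smul_eq_smul_integral (hr.memLp_gain i).1
    (memLp_two_batchMean (hr.memLp_sample i)).1, hr.integral_gain, integral_batchMean hM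
    (fun m => (hr.memLp_sample i m).integrable one_le_two) (hr.integral_sample i)]

theorem integral_aggregate (hM : 0 < M) (hr : OverTheAirRound ν h X n m_h σ_h2 W B g) :
    ∫ ω, aggregate h X n ω ∂ν = (N * m_h) • g := by
  have hint (i : Fin N) := (hr.memLp_gain_smul_batchMean i).integrable one_le_two
  simp only [aggregate]
  rw [integral_add (integrable_finsetSum _ fun i _ => hint i)
    (hr.memLp_noise.integrable one_le_two), integral_finsetSum _ fun i _ => hint i]
  simp [hr.integral_gain_smul_batchMean hM, hr.integral_noise, ← Nat.cast_smul_eq_nsmul ℝ,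
    smul_smul]

variable [CompleteSpace E]

theorem integral_norm_sq_gain_smul_batchMean_le (hM : 0 < M)
    (hr : OverTheAirRound ν h X n m_h σ_h2 W B g) (i : Fin N) :
    ∫ ω, ‖h i ω • batchMean (X i) ω‖ ^ 2 ∂ν ≤ σ_h2 * (W / M + (M - 1) / M * ‖g‖ ^ 2) := by
  rw [integral_norm_sq_smul_of_indepFun (hr.memLp_gain i).1
    (memLp_two_batchMean (hr.memLp_sample i)).1 (hr.indepFun_gain_batchMean i)]
  have hσ : 0 ≤ σ_h2 :=
    (integral_nonneg fun ω => sq_nonneg (h i ω)).trans (hr.integral_gain_sq_le i)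
  gcongr
  · exact hr.integral_gain_sq_le i
  · exact integral_norm_sq_batchMean_le hM (hr.memLp_sample i) (hr.pairwise_indepFun_sample i)
      (hr.integral_sample i) (hr.integral_norm_sq_sample_le i)

theorem integral_norm_sq_aggregate_le (hM : 0 < M) (hr : OverTheAirRound ν h X n m_h σ_h2 W B g) :
    ∫ ω, ‖aggregate h X n ω‖ ^ 2 ∂ν ≤ aggregateBound N M m_h σ_h2 W B (‖g‖ ^ 2) := by
  have hsignal : MemLp (fun ω => ∑ i, h i ω • batchMean (X i) ω) 2 ν :=
    memLp_finsetSum _ fun i _ => hr.memLp_gain_smul_batchMean i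
  have hsignal_sq := integral_norm_sq_sum_le_of_pairwise_indepFun (s := Finset.univ)
    (fun i _ => hr.memLp_gain_smul_batchMean i)
    (hr.pairwise_indepFun_gain_smul_batchMean.set_pairwise _)
    (fun i _ => hr.integral_gain_smul_batchMean hM i)
    fun i _ => hr.integral_norm_sq_gain_smul_batchMean_le hM i
  rw [Finset.card_univ, Fintype.card_fin, norm_smul, mul_pow, Real.norm_eq_abs, sq_abs]
    at hsignal_sq
  simp only [aggregate, aggregateBound]
  rw [integral_norm_add_sq hsignal hr.memLp_noise,
    integral_inner_of_indepFun hsignal hr.memLp_noise hr.indepFun_sum_noise, hr.integral_noise,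
    inner_zero_right, mul_zero, add_zero]
  exact add_le_add hsignal_sq hr.integral_norm_sq_noise_le

end OverTheAirRound

end Round

section AggregateBound

variable {Ω : Type*} {mΩ : MeasurableSpace Ω} {μ : Measure Ω} {N M : ℕ} {m_h σ_h2 W B : ℝ}
  {G : Ω → ℝ}

theorem integrable_aggregateBound [IsFiniteMeasure μ] (hG : Integrable G μ) :
    Integrable (fun ω => aggregateBound N M m_h σ_h2 W B (G ω)) μ := by
  unfold aggregateBound
  fun_prop

theorem integral_aggregateBound [IsProbabilityMeasure μ] (hG : Integrable G μ) :
    ∫ ω, aggregateBound N M m_h σ_h2 W B (G ω) ∂μ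
      = aggregateBound N M m_h σ_h2 W B (∫ ω, G ω ∂μ) := by
  have haffine (x : ℝ) : aggregateBound N M m_h σ_h2 W B x
      = (N * (σ_h2 * ((M - 1) / M)) + N * (N - 1) * m_h ^ 2) * x + (N * (σ_h2 * (W / M)) + B) := by
    unfold aggregateBound
    ring
  simp only [haffine]
  rw [integral_add (hG.const_mul _) (integrable_const _), integral_const_mul, integral_const,
    probReal_univ, one_smul]

end AggregateBound

section CondRound

open scoped RealInnerProductSpace

variable {Ω E : Type*} {N M : ℕ} {m mΩ : MeasurableSpace Ω} [StandardBorelSpace Ω]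
  [NormedAddCommGroup E] [InnerProductSpace ℝ E] [MeasurableSpace E]

/-- One communication round given the past `m`: the conditional counterpart of
`OverTheAirRound`, with a random mean gradient `g`. -/
structure CondOverTheAirRound (hm : m ≤ mΩ) (μ : Measure Ω) [IsFiniteMeasure μ]
    (h : Fin N → Ω → ℝ) (X : Fin N → Fin M → Ω → E) (n : Ω → E) (m_h σ_h2 W B : ℝ)
    (g : Ω → E) : Prop where
  iCondIndepFun : iCondIndepFun m hm (roundFamily h X n) μ
  memLp_gain (i : Fin N) : MemLp (h i) 2 μ
  memLp_sample (i : Fin N) (j : Fin M) : MemLp (X i j) 2 μ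
  memLp_noise : MemLp n 2 μ
  condExp_gain (i : Fin N) : μ[h i | m] =ᵐ[μ] fun _ => m_h
  condExp_gain_sq_le (i : Fin N) : μ[fun ω => h i ω ^ 2 | m] ≤ᵐ[μ] fun _ => σ_h2
  condExp_sample (i : Fin N) (j : Fin M) : μ[X i j | m] =ᵐ[μ] g
  condExp_norm_sq_sample_le (i : Fin N) (j : Fin M) :
    μ[fun ω => ‖X i j ω‖ ^ 2 | m] ≤ᵐ[μ] fun _ => W
  condExp_noise : μ[n | m] =ᵐ[μ] 0
  condExp_norm_sq_noise_le : μ[fun ω => ‖n ω‖ ^ 2 | m] ≤ᵐ[μ] fun _ => B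

namespace CondOverTheAirRound

variable {μ : Measure Ω} [IsFiniteMeasure μ] {hm : m ≤ mΩ} {h : Fin N → Ω → ℝ}
  {X : Fin N → Fin M → Ω → E} {n : Ω → E} {m_h σ_h2 W B : ℝ} {g : Ω → E}

theorem aestronglyMeasurable_mean (hN : 0 < N) (hM : 0 < M)
    (hr : CondOverTheAirRound hm μ h X n m_h σ_h2 W B g) : AEStronglyMeasurable[m] g μ :=
  stronglyMeasurable_condExp.aestronglyMeasurable.congr (hr.condExp_sample ⟨0, hN⟩ ⟨0, hM⟩)

theorem aestronglyMeasurable_aggregate (hr : CondOverTheAirRound hm μ h X n m_h σ_h2 W B g) :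
    AEStronglyMeasurable (aggregate h X n) μ :=
  (Finset.aestronglyMeasurable_fun_sum _ fun i _ => (hr.memLp_gain i).1.smul
    (memLp_two_batchMean (hr.memLp_sample i)).1).add hr.memLp_noise.1

variable [CompleteSpace E]

theorem memLp_mean (hN : 0 < N) (hM : 0 < M)
    (hr : CondOverTheAirRound hm μ h X n m_h σ_h2 W B g) : MemLp g 2 μ :=
  (memLp_congr_ae (hr.condExp_sample ⟨0, hN⟩ ⟨0, hM⟩)).1 ((hr.memLp_sample _ _).condExp one_le_two)

variable [BorelSpace E] [SecondCountableTopology E]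

theorem of_indep (hind : ProbabilityTheory.iCondIndepFun m hm (roundFamily h X n) μ)
    (hh : ∀ i, MemLp (h i) 2 μ) (hX : ∀ i j, MemLp (X i j) 2 μ) (hn : MemLp n 2 μ)
    (hh_indep : ∀ i, Indep (MeasurableSpace.comap (h i) inferInstance) m μ)
    (hn_indep : Indep (MeasurableSpace.comap n inferInstance) m μ)
    (hh_mean : ∀ i, ∫ ω, h i ω ∂μ = m_h) (hh_sq : ∀ i, ∫ ω, h i ω ^ 2 ∂μ ≤ σ_h2)
    (hX_mean : ∀ i j, μ[X i j | m] =ᵐ[μ] g)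
    (hX_sq : ∀ i j, μ[fun ω => ‖X i j ω‖ ^ 2 | m] ≤ᵐ[μ] fun _ => W)
    (hn_mean : ∫ ω, n ω ∂μ = 0) (hn_sq : ∫ ω, ‖n ω‖ ^ 2 ∂μ ≤ B) :
    CondOverTheAirRound hm μ h X n m_h σ_h2 W B g where
  iCondIndepFun := hind
  memLp_gain := hh
  memLp_sample := hX
  memLp_noise := hn
  condExp_gain i := hh_mean i ▸ condExp_comp_ae_eq_integral_of_indep hm (hh i).1.aemeasurable
    (hh_indep i) stronglyMeasurable_id
  condExp_gain_sq_le i := (condExp_comp_ae_eq_integral_of_indep hm (hh i).1.aemeasurable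
    (hh_indep i) (measurable_id.pow_const 2).stronglyMeasurable).le.trans
    (.of_forall fun _ => hh_sq i)
  condExp_sample := hX_mean
  condExp_norm_sq_sample_le := hX_sq
  condExp_noise := (condExp_comp_ae_eq_integral_of_indep hm hn.1.aemeasurable hn_indep
    stronglyMeasurable_id).trans (.of_forall fun _ => hn_mean)
  condExp_norm_sq_noise_le := (condExp_comp_ae_eq_integral_of_indep hm hn.1.aemeasurable hn_indep
    (measurable_norm.pow_const 2).stronglyMeasurable).le.trans (.of_forall fun _ => hn_sq)

theorem ae_overTheAirRound (hr : CondOverTheAirRound hm μ h X n m_h σ_h2 W B g) :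
    ∀ᵐ ω ∂μ, OverTheAirRound (condExpKernel μ m ω) h X n m_h σ_h2 W B (g ω) := by
  have hfam := aemeasurable_roundFamily (fun i => (hr.memLp_gain i).1.aemeasurable)
    (fun i j => (hr.memLp_sample i j).1.aemeasurable) hr.memLp_noise.1.aemeasurable
  filter_upwards [ae_iIndepFun_condExpKernel hm hfam hr.iCondIndepFun,
    ae_all_iff.2 fun i => ae_memLp_two_condExpKernel (m := m) (hr.memLp_gain i),
    ae_all_iff.2 fun i => ae_all_iff.2 fun j =>
      ae_memLp_two_condExpKernel (m := m) (hr.memLp_sample i j),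
    ae_memLp_two_condExpKernel (m := m) hr.memLp_noise,
    ae_all_iff.2 fun i => ae_integral_condExpKernel_eq hm
      ((hr.memLp_gain i).integrable one_le_two) (hr.condExp_gain i),
    ae_all_iff.2 fun i => ae_integral_condExpKernel_le hm
      (hr.memLp_gain i).integrable_sq (hr.condExp_gain_sq_le i),
    ae_all_iff.2 fun i => ae_all_iff.2 fun j => ae_integral_condExpKernel_eq hm
      ((hr.memLp_sample i j).integrable one_le_two) (hr.condExp_sample i j),
    ae_all_iff.2 fun i => ae_all_iff.2 fun j => ae_integral_condExpKernel_le hm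
      ((hr.memLp_sample i j).integrable_norm_pow two_ne_zero) (hr.condExp_norm_sq_sample_le i j),
    ae_integral_condExpKernel_eq hm (hr.memLp_noise.integrable one_le_two) hr.condExp_noise,
    ae_integral_condExpKernel_le hm (hr.memLp_noise.integrable_norm_pow two_ne_zero)
      hr.condExp_norm_sq_noise_le]
    with ω hind hh hX hn hh_mean hh_sq hX_mean hX_sq hn_mean hn_sq
  exact ⟨hind, hh, hX, hn, hh_mean, hh_sq, hX_mean, hX_sq, hn_mean, hn_sq⟩

-- Products of `L²` functions are not in `L²` in general: here independence under the conditional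
-- law is what makes them so.
theorem memLp_aggregate (hN : 0 < N) (hM : 0 < M)
    (hr : CondOverTheAirRound hm μ h X n m_h σ_h2 W B g) : MemLp (aggregate h X n) 2 μ := by
  refine memLp_two_of_ae_integral_norm_sq_condExpKernel_le hm hr.aestronglyMeasurable_aggregate
    (integrable_aggregateBound (N := N) (M := M) (m_h := m_h) (σ_h2 := σ_h2) (W := W) (B := B)
      ((hr.memLp_mean hN hM).integrable_norm_pow two_ne_zero)) ?_ ?_
  · filter_upwards [hr.ae_overTheAirRound] with ω hω using hω.memLp_aggregate
  · filter_upwards [hr.ae_overTheAirRound] with ω hω using hω.integral_norm_sq_aggregate_le hM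

theorem condExp_aggregate (hN : 0 < N) (hM : 0 < M)
    (hr : CondOverTheAirRound hm μ h X n m_h σ_h2 W B g) :
    μ[aggregate h X n | m] =ᵐ[μ] fun ω => (N * m_h) • g ω := by
  filter_upwards [condExp_ae_eq_integral_condExpKernel hm
    ((hr.memLp_aggregate hN hM).integrable one_le_two), hr.ae_overTheAirRound] with ω heq hω
  rw [heq, hω.integral_aggregate hM]

theorem integral_inner_mean_aggregate (hN : 0 < N) (hM : 0 < M)
    (hr : CondOverTheAirRound hm μ h X n m_h σ_h2 W B g) :
    ∫ ω, ⟪g ω, aggregate h X n ω⟫ ∂μ = N * m_h * ∫ ω, ‖g ω‖ ^ 2 ∂μ := by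
  have hv := hr.memLp_aggregate hN hM
  have hpull := condExp_bilin_of_aestronglyMeasurable_left (innerSL ℝ)
    (hr.aestronglyMeasurable_mean hN hM)
    (integrable_inner_of_memLp_two (hr.memLp_mean hN hM) hv) (hv.integrable one_le_two)
  rw [← integral_condExp hm, ← integral_const_mul]
  refine integral_congr_ae ?_
  filter_upwards [hpull, hr.condExp_aggregate hN hM] with ω hω hω_mean
  refine hω.trans ?_
  rw [hω_mean, innerSL_apply_apply, real_inner_smul_right, real_inner_self_eq_norm_sq]

end CondOverTheAirRound

theorem CondOverTheAirRound.integral_norm_sq_aggregate_le [CompleteSpace E] [BorelSpace E]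
    [SecondCountableTopology E] {μ : Measure Ω} [IsProbabilityMeasure μ] {hm : m ≤ mΩ}
    {h : Fin N → Ω → ℝ} {X : Fin N → Fin M → Ω → E} {n : Ω → E} {m_h σ_h2 W B : ℝ} {g : Ω → E}
    (hN : 0 < N) (hM : 0 < M) (hr : CondOverTheAirRound hm μ h X n m_h σ_h2 W B g) :
    ∫ ω, ‖aggregate h X n ω‖ ^ 2 ∂μ
      ≤ aggregateBound N M m_h σ_h2 W B (∫ ω, ‖g ω‖ ^ 2 ∂μ) := by
  have hg := (hr.memLp_mean hN hM).integrable_norm_pow two_ne_zero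
  rw [← integral_aggregateBound hg]
  refine integral_le_of_ae_integral_condExpKernel_le hm
    ((hr.memLp_aggregate hN hM).integrable_norm_pow two_ne_zero)
    (integrable_aggregateBound hg) ?_
  filter_upwards [hr.ae_overTheAirRound] with ω hω using hω.integral_norm_sq_aggregate_le hM

end CondRound

section GradientStep

open scoped RealInnerProductSpace NNReal

variable {Ω E : Type*} {mΩ : MeasurableSpace Ω} {μ : Measure Ω} [NormedAddCommGroup E]
  [InnerProductSpace ℝ E] [CompleteSpace E] {f : E → ℝ} {L : ℝ≥0} {θ v : Ω → E}

theorem le_sub_smul_inner_gradient_add_norm_sq (hf : Differentiable ℝ f)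
    (hL : LipschitzWith L (∇ f)) (η : ℝ) (x u : E) :
    f (x - η • u) ≤ f x - η * ⟪∇ f x, u⟫ + L / 2 * η ^ 2 * ‖u‖ ^ 2 := by
  have h := le_add_inner_gradient_add_norm_sq hf hL x (-(η • u))
  rw [← sub_eq_add_neg, inner_neg_right, real_inner_smul_right, norm_neg, norm_smul, mul_pow,
    Real.norm_eq_abs, sq_abs] at h
  linarith

theorem integrable_inner_gradient_add_norm_sq (hfθ : Integrable (fun ω => f (θ ω)) μ)
    (hg : MemLp (fun ω => ∇ f (θ ω)) 2 μ) (hv : MemLp v 2 μ) (η : ℝ) :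
    Integrable (fun ω => f (θ ω) - η * ⟪∇ f (θ ω), v ω⟫ + L / 2 * η ^ 2 * ‖v ω‖ ^ 2) μ :=
  (hfθ.sub ((integrable_inner_of_memLp_two hg hv).const_mul η)).add
    ((hv.integrable_norm_pow two_ne_zero).const_mul _)

theorem integrable_comp_sub_smul [IsFiniteMeasure μ] (hf : Differentiable ℝ f)
    (hL : LipschitzWith L (∇ f)) {A : ℝ} (hA : ∀ x, A ≤ f x) (hθ : AEStronglyMeasurable θ μ)
    (hfθ : Integrable (fun ω => f (θ ω)) μ) (hg : MemLp (fun ω => ∇ f (θ ω)) 2 μ)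
    (hv : MemLp v 2 μ) (η : ℝ) : Integrable (fun ω => f (θ ω - η • v ω)) μ :=
  integrable_of_le_of_le (hf.continuous.comp_aestronglyMeasurable (hθ.sub (hv.1.const_smul η)))
    (.of_forall fun _ => hA _)
    (.of_forall fun ω => le_sub_smul_inner_gradient_add_norm_sq hf hL η (θ ω) (v ω))
    (integrable_const A) (integrable_inner_gradient_add_norm_sq hfθ hg hv η)

theorem integral_comp_sub_smul_le (hf : Differentiable ℝ f) (hL : LipschitzWith L (∇ f)) {η : ℝ}
    (hfθ : Integrable (fun ω => f (θ ω)) μ) (hg : MemLp (fun ω => ∇ f (θ ω)) 2 μ)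
    (hv : MemLp v 2 μ) (hfstep : Integrable (fun ω => f (θ ω - η • v ω)) μ) :
    ∫ ω, f (θ ω - η • v ω) ∂μ ≤ ∫ ω, f (θ ω) ∂μ - η * ∫ ω, ⟪∇ f (θ ω), v ω⟫ ∂μ
      + L / 2 * η ^ 2 * ∫ ω, ‖v ω‖ ^ 2 ∂μ := by
  have hinner := (integrable_inner_of_memLp_two hg hv).const_mul η
  rw [← integral_const_mul, ← integral_const_mul, ← integral_sub hfθ hinner,
    ← integral_add (by exact hfθ.sub hinner) ((hv.integrable_norm_pow two_ne_zero).const_mul _)]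
  exact integral_mono hfstep (integrable_inner_gradient_add_norm_sq hfθ hg hv η)
    fun ω => le_sub_smul_inner_gradient_add_norm_sq hf hL η (θ ω) (v ω)

end GradientStep

theorem average_le_of_forall_mul_le_sub_add {a G : ℕ → ℝ} {A b c : ℝ} {K : ℕ} (hc : 0 < c)
    (hK : 0 < K) (hstep : ∀ k, c * G k ≤ a k - a (k + 1) + b) (hA : A ≤ a K) :
    1 / (K : ℝ) * ∑ k ∈ Finset.range K, G k ≤ (a 0 - A) / (c * K) + b / c := by
  have : (0 : ℝ) < K := by exact_mod_cast hK
  have hsum : c * ∑ k ∈ Finset.range K, G k ≤ a 0 - A + K * b := by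
    calc c * ∑ k ∈ Finset.range K, G k
        ≤ ∑ k ∈ Finset.range K, (a k - a (k + 1) + b) := by
          rw [Finset.mul_sum]
          exact Finset.sum_le_sum fun k _ => hstep k
      _ = a 0 - a K + K * b := by
          rw [Finset.sum_add_distrib, Finset.sum_range_sub']
          simp
      _ ≤ a 0 - A + K * b := by gcongr
  calc 1 / (K : ℝ) * ∑ k ∈ Finset.range K, G k
      = (c * ∑ k ∈ Finset.range K, G k) / (c * K) := by field_simp
    _ ≤ (a 0 - A + K * b) / (c * K) := by gcongr
    _ = (a 0 - A) / (c * K) + b / c := by field_simp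

section Descent

open scoped RealInnerProductSpace NNReal

/-- The constant `Λ` of the paper: up to the factor `α / (2 * m_h * N * M)`, the coefficient of
`E[‖∇ J‖ ^ 2]` in the expected decrease of `J` over one round. -/
def descentMargin (N M : ℕ) (m_h σ_h2 : ℝ) : ℝ :=
  M * (N + 1) * m_h ^ 2 - (M - 1) * σ_h2

theorem descentMargin_pos {N M : ℕ} {m_h σ_h2 : ℝ} (hM : 0 < M) (hm : 0 < m_h)
    (hσ : σ_h2 ≤ (N + 1) * m_h ^ 2) : 0 < descentMargin N M m_h σ_h2 := by
  have hM1 : (0 : ℝ) ≤ M - 1 := sub_nonneg.2 (by exact_mod_cast hM)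
  calc (0 : ℝ) < (N + 1) * m_h ^ 2 := by positivity
    _ = M * (N + 1) * m_h ^ 2 - (M - 1) * ((N + 1) * m_h ^ 2) := by ring
    _ ≤ descentMargin N M m_h σ_h2 := by
        unfold descentMargin
        gcongr

variable {Ω E : Type*} {mΩ : MeasurableSpace Ω} [StandardBorelSpace Ω] {μ : Measure Ω}
  [IsProbabilityMeasure μ] [NormedAddCommGroup E] [InnerProductSpace ℝ E] [CompleteSpace E]
  [SecondCountableTopology E] [MeasurableSpace E] [BorelSpace E] {N M : ℕ}
  {m_h σ_h2 W B α : ℝ} {J : E → ℝ} {L : ℝ≥0}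

theorem CondOverTheAirRound.mul_integral_norm_sq_gradient_le {m : MeasurableSpace Ω} {hm : m ≤ mΩ}
    {h : Fin N → Ω → ℝ} {X : Fin N → Fin M → Ω → E} {n θ θ' : Ω → E}
    (hr : CondOverTheAirRound hm μ h X n m_h σ_h2 W B fun ω => ∇ J (θ ω))
    (hθ : θ' = fun ω => θ ω - (α / N) • aggregate h X n ω)
    (hN : 0 < N) (hM : 0 < M) (hm_h : 0 < m_h) (hα : 0 ≤ α) (hαL : m_h * L * α ≤ 1)
    (hJ : Differentiable ℝ J) (hL : LipschitzWith L (∇ J))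
    (hJθ : Integrable (fun ω => J (θ ω)) μ)
    (hJθ' : Integrable (fun ω => J (θ' ω)) μ) :
    α * descentMargin N M m_h σ_h2 / (2 * m_h * N * M) * ∫ ω, ‖∇ J (θ ω)‖ ^ 2 ∂μ
      ≤ ∫ ω, J (θ ω) ∂μ - ∫ ω, J (θ' ω) ∂μ
        + α / (2 * m_h * N ^ 2) * (N * (σ_h2 * W / M) + B) := by
  subst hθ
  have : (0 : ℝ) < N := by exact_mod_cast hN
  have : (0 : ℝ) < M := by exact_mod_cast hM
  have hstep := integral_comp_sub_smul_le hJ hL hJθ (hr.memLp_mean hN hM)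
    (hr.memLp_aggregate hN hM) hJθ'
  have hcurv : L / 2 * (α / N) ^ 2 ≤ α / (2 * m_h * N ^ 2) := by
    calc L / 2 * (α / N) ^ 2 = m_h * L * α * (α / (2 * m_h * N ^ 2)) := by field_simp
      _ ≤ 1 * (α / (2 * m_h * N ^ 2)) := by gcongr
      _ = α / (2 * m_h * N ^ 2) := one_mul _
  have hquad : L / 2 * (α / N) ^ 2 * ∫ ω, ‖aggregate h X n ω‖ ^ 2 ∂μ ≤ α / (2 * m_h * N ^ 2)
      * aggregateBound N M m_h σ_h2 W B (∫ ω, ‖∇ J (θ ω)‖ ^ 2 ∂μ) := by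
    gcongr
    exact hr.integral_norm_sq_aggregate_le hN hM
  rw [hr.integral_inner_mean_aggregate hN hM] at hstep
  set G := ∫ ω, ‖∇ J (θ ω)‖ ^ 2 ∂μ
  have hmargin : α / N * (N * m_h * G) - α / (2 * m_h * N ^ 2) * aggregateBound N M m_h σ_h2 W B G
      = α * descentMargin N M m_h σ_h2 / (2 * m_h * N * M) * G
        - α / (2 * m_h * N ^ 2) * (N * (σ_h2 * W / M) + B) := by
    unfold aggregateBound descentMargin
    field_simp
    ring
  linarith

variable {𝓕 : ℕ → MeasurableSpace Ω} {h𝓕 : ∀ k, 𝓕 k ≤ mΩ} {h : ℕ → Fin N → Ω → ℝ}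
  {X : ℕ → Fin N → Fin M → Ω → E} {n θ : ℕ → Ω → E} {Jstar : ℝ}

theorem integrable_comp_iterate (hN : 0 < N) (hM : 0 < M)
    (hr : ∀ k, CondOverTheAirRound (h𝓕 k) μ (h k) (X k) (n k) m_h σ_h2 W B
      fun ω => ∇ J (θ k ω))
    (hθ : ∀ k, θ (k + 1) = fun ω => θ k ω - (α / N) • aggregate (h k) (X k) (n k) ω)
    (hJ : Differentiable ℝ J) (hL : LipschitzWith L (∇ J)) (hJstar : ∀ x, Jstar ≤ J x)
    (hθ0 : AEStronglyMeasurable (θ 0) μ) (hJθ0 : Integrable (fun ω => J (θ 0 ω)) μ) (k : ℕ) :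
    Integrable (fun ω => J (θ k ω)) μ := by
  suffices hmeas_int : AEStronglyMeasurable (θ k) μ ∧ Integrable (fun ω => J (θ k ω)) μ from
    hmeas_int.2
  induction k with
  | zero => exact ⟨hθ0, hJθ0⟩
  | succ k ih =>
    have hv := (hr k).memLp_aggregate hN hM
    rw [hθ k]
    exact ⟨ih.1.sub (hv.1.const_smul _), integrable_comp_sub_smul hJ hL hJstar ih.1 ih.2
      ((hr k).memLp_mean hN hM) hv _⟩

theorem average_integral_norm_sq_gradient_le (hN : 0 < N) (hM : 0 < M)
    (hr : ∀ k, CondOverTheAirRound (h𝓕 k) μ (h k) (X k) (n k) m_h σ_h2 W B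
      fun ω => ∇ J (θ k ω))
    (hθ : ∀ k, θ (k + 1) = fun ω => θ k ω - (α / N) • aggregate (h k) (X k) (n k) ω)
    (hJ : Differentiable ℝ J) (hL : LipschitzWith L (∇ J)) (hJstar : ∀ x, Jstar ≤ J x)
    (hθ0 : AEStronglyMeasurable (θ 0) μ) (hJθ0 : Integrable (fun ω => J (θ 0 ω)) μ)
    (hm_h : 0 < m_h) (hα : 0 < α) (hαL : m_h * L * α ≤ 1)
    (hΛ : 0 < descentMargin N M m_h σ_h2) {K : ℕ} (hK : 0 < K) :
    1 / (K : ℝ) * ∑ k ∈ Finset.range K, ∫ ω, ‖∇ J (θ k ω)‖ ^ 2 ∂μ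
      ≤ 2 * M * N * m_h * (∫ ω, J (θ 0 ω) ∂μ - Jstar) / (α * descentMargin N M m_h σ_h2 * K)
        + (σ_h2 * W + M * B / N) / descentMargin N M m_h σ_h2 := by
  have : (0 : ℝ) < N := by exact_mod_cast hN
  have : (0 : ℝ) < M := by exact_mod_cast hM
  have hJθ := integrable_comp_iterate hN hM hr hθ hJ hL hJstar hθ0 hJθ0
  have hdescent (k : ℕ) := (hr k).mul_integral_norm_sq_gradient_le (hθ k) hN hM hm_h hα.le
    hαL hJ hL (hJθ k) (hJθ (k + 1))
  have hlower : Jstar ≤ ∫ ω, J (θ K ω) ∂μ := by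
    simpa using integral_mono (integrable_const Jstar) (hJθ K) fun ω => hJstar (θ K ω)
  refine (average_le_of_forall_mul_le_sub_add (a := fun k => ∫ ω, J (θ k ω) ∂μ) (by positivity)
    hK hdescent hlower).trans_eq ?_
  field_simp

theorem overTheAir_epsilon_stationary_general (hN : 0 < N) (hM : 0 < M)
    (hr : ∀ k, CondOverTheAirRound (h𝓕 k) μ (h k) (X k) (n k) m_h σ_h2 W B
      fun ω => ∇ J (θ k ω))
    (hθ : ∀ k, θ (k + 1) = fun ω => θ k ω - (α / N) • aggregate (h k) (X k) (n k) ω)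
    (hJ : Differentiable ℝ J) (hL : LipschitzWith L (∇ J)) (hJstar : ∀ x, Jstar ≤ J x)
    (hθ0 : AEStronglyMeasurable (θ 0) μ) (hJθ0 : Integrable (fun ω => J (θ 0 ω)) μ)
    (hm_h : 0 < m_h) (hα : 0 < α) (hαL : m_h * L * α ≤ 1)
    (hΛ : 0 < descentMargin N M m_h σ_h2) {ε : ℝ} (hε : 0 < ε)
    (hεW : 3 * σ_h2 * W ≤ descentMargin N M m_h σ_h2 * ε)
    (hεB : 3 * M * B ≤ N * descentMargin N M m_h σ_h2 * ε) {K : ℕ} (hK : 0 < K)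
    (hεK : 6 * M * N * m_h * (∫ ω, J (θ 0 ω) ∂μ - Jstar)
      / (α * descentMargin N M m_h σ_h2 * ε) ≤ K) :
    1 / (K : ℝ) * ∑ k ∈ Finset.range K, ∫ ω, ‖∇ J (θ k ω)‖ ^ 2 ∂μ ≤ ε := by
  have : (0 : ℝ) < N := by exact_mod_cast hN
  have : (0 : ℝ) < K := by exact_mod_cast hK
  refine (average_integral_norm_sq_gradient_le hN hM hr hθ hJ hL hJstar hθ0 hJθ0 hm_h hα hαL hΛ
    hK).trans ?_
  set Λ := descentMargin N M m_h σ_h2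
  have hinit : 2 * M * N * m_h * (∫ ω, J (θ 0 ω) ∂μ - Jstar) / (α * Λ * K) ≤ ε / 3 := by
    rw [div_le_iff₀ (by positivity)] at hεK ⊢
    linarith
  have hbias : (σ_h2 * W + M * B / N) / Λ ≤ 2 * ε / 3 := by
    have hnoise : M * B / N ≤ Λ * ε / 3 := by
      rw [div_le_iff₀ (by positivity)]
      linarith
    rw [div_le_iff₀ hΛ]
    linarith
  linarith

end Descent

/-- Corollary 1 of the paper: finding an ε-approximate stationary point.
If `σ_h² ≤ (N+1) m_h²`, `0 < α ≤ 1/(m_h L)`, `Λ = M(N+1)m_h² - (M-1)σ_h²`, `ε > 0`,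
`3 σ_h² V² ≤ Λ ε`, `3 M σ̄² ≤ N Λ ε` and `K ≥ max(1, 6 M N m_h (J(θ⁰) - J*)/(α Λ ε))`,
then `(1/K) Σ_{k<K} E[‖∇J(θ^k)‖²] ≤ ε`. -/
theorem overTheAir_epsilon_stationary
    {d : ℕ} (hd : 1 ≤ d) {N M : ℕ} (hN : 0 < N) (hM : 0 < M)
    {Ω : Type*} [mΩ : MeasurableSpace Ω] [StandardBorelSpace Ω] [Nonempty Ω]
    (μ : Measure Ω) [IsProbabilityMeasure μ]
    (m_h σ_h2 V σbar2 α L : ℝ)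
    (hm : 0 < m_h) (hσh : 0 ≤ σ_h2) (hV : 0 ≤ V) (hσbar : 0 ≤ σbar2)
    (hL : 0 < L) (hα : 0 < α) (hαL : α ≤ 1 / (m_h * L))
    (J : EuclideanSpace ℝ (Fin d) → ℝ) (hJ : Differentiable ℝ J)
    (hLip : ∀ x y : EuclideanSpace ℝ (Fin d),
      ‖gradient J x - gradient J y‖ ≤ L * ‖x - y‖)
    (Jstar : ℝ) (hJstar : IsGLB (Set.range J) Jstar)
    (𝓕 : Filtration ℕ mΩ)
    (h : ℕ → Fin N → Ω → ℝ)
    (X : ℕ → Fin N → Fin M → Ω → EuclideanSpace ℝ (Fin d))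
    (n : ℕ → Ω → EuclideanSpace ℝ (Fin d))
    (θ : ℕ → Ω → EuclideanSpace ℝ (Fin d))
    (θ0 : EuclideanSpace ℝ (Fin d)) (hθ0 : θ 0 = fun _ => θ0)
    (v : ℕ → Ω → EuclideanSpace ℝ (Fin d))
    (hv : ∀ k, v k = fun ω =>
      (∑ i : Fin N, h k i ω • ((1 / (M : ℝ)) • ∑ m : Fin M, X k i m ω)) + n k ω)
    (hθ : ∀ k, θ (k + 1) = fun ω => θ k ω - (α / (N : ℝ)) • v k ω)
    (hθmeas : ∀ k, Measurable[𝓕 k] (θ k))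
    (hh2 : ∀ k i, MemLp (h k i) 2 μ)
    (hX2 : ∀ k i m, MemLp (X k i m) 2 μ)
    (hn2 : ∀ k, MemLp (n k) 2 μ)
    (hcondind : ∀ k, iCondIndepFun (𝓕 k) (𝓕.le k)
      (otaFam (h k) (X k) (n k)) μ)
    (hhind : ∀ k i, Indep (MeasurableSpace.comap (h k i) inferInstance) (𝓕 k) μ)
    (hnind : ∀ k, Indep (MeasurableSpace.comap (n k) inferInstance) (𝓕 k) μ)
    (hEh : ∀ k i, ∫ ω, h k i ω ∂μ = m_h)
    (hEh2 : ∀ k i, ∫ ω, (h k i ω) ^ 2 ∂μ = σ_h2)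
    (hEn : ∀ k, ∫ ω, n k ω ∂μ = 0)
    (hVn : ∀ k, ∫ ω, ‖n k ω‖ ^ 2 ∂μ ≤ σbar2)
    (hEX : ∀ k i m, μ[X k i m | 𝓕 k] =ᵐ[μ] fun ω => gradient J (θ k ω))
    (hVX : ∀ k i m, ∀ᵐ ω ∂μ, (μ[fun ω' => ‖X k i m ω'‖ ^ 2 | 𝓕 k]) ω ≤ V ^ 2)
    (hchan : σ_h2 ≤ ((N : ℝ) + 1) * m_h ^ 2)
    (Λ : ℝ) (hΛ : Λ = (M : ℝ) * ((N : ℝ) + 1) * m_h ^ 2 - ((M : ℝ) - 1) * σ_h2)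
    (ε : ℝ) (hε : 0 < ε)
    (hεV : 3 * σ_h2 * V ^ 2 ≤ Λ * ε)
    (hεn : 3 * (M : ℝ) * σbar2 ≤ (N : ℝ) * Λ * ε)
    (K : ℕ) (hK1 : 1 ≤ K)
    (hK : 6 * (M : ℝ) * (N : ℝ) * m_h * (J θ0 - Jstar) / (α * Λ * ε) ≤ (K : ℝ)) :
    (1 / (K : ℝ)) * ∑ k ∈ Finset.range K, ∫ ω, ‖gradient J (θ k ω)‖ ^ 2 ∂μ ≤ ε := by
  have hαL' : m_h * L * α ≤ 1 := by
    rwa [le_div_iff₀ (by positivity), mul_comm] at hαL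
  lift L to NNReal using hL.le
  have hround (k : ℕ) : CondOverTheAirRound (𝓕.le k) μ (h k) (X k) (n k) m_h σ_h2 (V ^ 2) σbar2
      fun ω => ∇ J (θ k ω) :=
    .of_indep (otaFam_eq_roundFamily (h k) (X k) (n k) ▸ hcondind k) (hh2 k) (hX2 k) (hn2 k)
      (hhind k) (hnind k) (hEh k) (fun i => (hEh2 k i).le) (hEX k) (hVX k) (hEn k) (hVn k)
  have hstep (k : ℕ) :
      θ (k + 1) = fun ω => θ k ω - (α / N) • aggregate (h k) (X k) (n k) ω := by
    rw [hθ, hv]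
    rfl
  obtain rfl : Λ = descentMargin N M m_h σ_h2 := hΛ
  refine overTheAir_epsilon_stationary_general hN hM hround hstep hJ
    (.of_dist_le_mul fun x y => by simpa only [dist_eq_norm] using hLip x y)
    (fun x => hJstar.1 (Set.mem_range_self x)) (hθ0 ▸ aestronglyMeasurable_const)
    (by simp [hθ0]) hm hα hαL' (descentMargin_pos hM hm hchan) hε hεV hεn hK1 ?_
  simpa [hθ0] using hK
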